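/- Fix n ≥ 2 and let S be a finite subset of SL(n, ℤ) whose elements generate SL(n, ℤ) as a group. For each L, among the |S|^L words w : Fin L → S, let G(L) be the number of words such that for every integer k ≥ 1, the characteristic polynomial of the underlying integer matrix of M_w^k, mapped to ℚ[X], is irreducible. Then G(L) / |S|^L tends to 1 as L tends to infinity. -/

import Mathlib

/-!
If some power of `A ∈ SL(n, ℤ)` has a reducible characteristic polynomial, then that polynomial has
a proper monic factor over `ℤ` with constant coefficient `±1`. Hence for some `0 < d < n` a product
of `d` eigenvalues of `A` is a root of unity `ζ`. As `ζ` is an eigenvalue of the integer matrix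
`A^{⊗d}` of size `n ^ d`, its order is bounded in terms of `n`, so `A` is a zero of one of finitely
many polynomials in its entries, which can be made homogeneous. None of them is the zero polynomial,
since in a diagonal matrix of indeterminates no product of `d < n` diagonal entries is, up to
powers, the determinant.

A random product is rarely a zero of a fixed nonzero homogeneous polynomial `Q`. For a prime `p > 3`
the group `SL(n, ℤ/p)` is perfect, so a random walk whose steps generate it has no periodicity and
equidistributes. By the Schwartz-Zippel bound, applied to the cone over `SL(n, ℤ/p)` in the space of
all matrices, only a proportion `O(1/p)` of this group consists of zeros of `Q`. Letting `p` tend to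
infinity gives density zero.
-/

open Filter Topology Finset
open scoped BigOperators

section Words

variable {α M N : Type*} [Monoid M] [Monoid N]

/-- The product `s (w 0) * s (w 1) * ⋯ * s (w (L - 1))` of a word `w` of length `L`, whose letters
are the indices of a family `s` of elements of a monoid. -/
def wordProd (s : α → M) {L : ℕ} (w : Fin L → α) : M :=
  (List.ofFn fun i ↦ s (w i)).prod

theorem wordProd_cons (s : α → M) {L : ℕ} (a : α) (w : Fin L → α) :
    wordProd s (Fin.cons a w : Fin (L + 1) → α) = s a * wordProd s w := by
  simp [wordProd]

theorem wordProd_append (s : α → M) {K L : ℕ} (v : Fin K → α) (w : Fin L → α) :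
    wordProd s (Fin.append v w) = wordProd s v * wordProd s w := by
  have h : (fun i ↦ s (Fin.append v w i)) = Fin.append (fun i ↦ s (v i)) (fun i ↦ s (w i)) := by
    ext i
    induction i using Fin.addCases <;> simp
  rw [wordProd, h, List.ofFn_fin_append, List.prod_append, wordProd, wordProd]

theorem wordProd_const (s : α → M) (L : ℕ) (a : α) :
    wordProd s (fun _ : Fin L ↦ a) = s a ^ L := by
  simp [wordProd]

theorem map_wordProd {F : Type*} [FunLike F M N] [MonoidHomClass F M N] (f : F) (s : α → M)
    {L : ℕ} (w : Fin L → α) : f (wordProd s w) = wordProd (f ∘ s) w := by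
  simp [wordProd, map_list_prod, List.map_ofFn, Function.comp_def]

theorem exists_wordProd_eq_of_mem_closure {G : Type*} [Group G] [Finite G] {s : α → G} {g : G}
    (hg : g ∈ Subgroup.closure (Set.range s)) : ∃ (L : ℕ) (w : Fin L → α), wordProd s w = g := by
  rw [← Subgroup.mem_toSubmonoid, Subgroup.closure_toSubmonoid_of_finite] at hg
  induction hg using Submonoid.closure_induction with
  | mem _ h =>
    obtain ⟨a, rfl⟩ := h
    exact ⟨1, fun _ ↦ a, by simp [wordProd_const]⟩
  | one => exact ⟨0, Fin.elim0, by simp [wordProd]⟩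
  | mul _ _ _ _ hx hy =>
    obtain ⟨K, v, rfl⟩ := hx
    obtain ⟨L, w, rfl⟩ := hy
    exact ⟨K + L, Fin.append v w, wordProd_append s v w⟩

end Words

section WordProportion

variable {α M N : Type*} [Fintype α] [Monoid M] [Monoid N] (s : α → M) (P Q : M → Prop) (L : ℕ)

open scoped Classical in
/-- The proportion of words of length `L` in the family `s` whose product satisfies `P`. -/
noncomputable def wordProportion : ℝ :=
  #{w : Fin L → α | P (wordProd s w)} / (Fintype.card α : ℝ) ^ L

theorem wordProportion_nonneg : 0 ≤ wordProportion s P L := by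
  rw [wordProportion]
  positivity

variable {P Q} in
theorem wordProportion_mono (h : ∀ x, P x → Q x) :
    wordProportion s P L ≤ wordProportion s Q L := by
  rw [wordProportion, wordProportion]
  gcongr
  exact h _

theorem wordProportion_comp_monoidHom (f : M →* N) (P : N → Prop) :
    wordProportion s (fun x ↦ P (f x)) L = wordProportion (f ∘ s) P L := by
  rw [wordProportion, wordProportion]
  congr! 4 with w
  rw [map_wordProd]

theorem wordProportion_add_not [Nonempty α] :
    wordProportion s P L + wordProportion s (fun x ↦ ¬ P x) L = 1 := by
  have hα : (Fintype.card α : ℝ) ^ L ≠ 0 := by positivity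
  classical
  rw [wordProportion, wordProportion, ← add_div, div_eq_one_iff_eq hα, ← Nat.cast_add,
    card_filter_add_card_filter_not]
  simp

variable {s P Q} in
theorem tendsto_wordProportion_one [Nonempty α] (h : ∀ x, ¬ P x → Q x)
    (hQ : Tendsto (wordProportion s Q) atTop (𝓝 0)) :
    Tendsto (wordProportion s P) atTop (𝓝 1) := by
  have hnot : Tendsto (wordProportion s fun x ↦ ¬ P x) atTop (𝓝 0) :=
    squeeze_zero (wordProportion_nonneg s _) (fun L ↦ wordProportion_mono s L h) hQ
  rw [← sub_zero (1 : ℝ)]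
  exact (hnot.const_sub 1).congr fun L ↦ (eq_sub_of_add_eq (wordProportion_add_not s P L)).symm

end WordProportion

section PerfectGroups

variable {H : Type*} [Group H] [Group.IsPerfect H]

theorem mk_one_mem_of_map_fst_eq_top {A : Type*} [CommGroup A] {Γ : Subgroup (H × A)}
    (hΓ : Γ.map (MonoidHom.fst H A) = ⊤) (h : H) : (h, (1 : A)) ∈ Γ := by
  have hfst : ⁅Γ, Γ⁆.map (MonoidHom.fst H A) = ⊤ := by
    rw [Subgroup.map_commutator, hΓ, ← commutator_def, Group.IsPerfect.commutator_eq_top]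
  have hsnd : ⁅Γ, Γ⁆ ≤ (MonoidHom.snd H A).ker :=
    (Subgroup.commutator_mono le_top le_top).trans (Abelianization.commutator_subset_ker _)
  obtain ⟨⟨_, a⟩, hγ, rfl⟩ : h ∈ ⁅Γ, Γ⁆.map (MonoidHom.fst H A) := hfst ▸ Subgroup.mem_top h
  obtain rfl : a = 1 := hsnd hγ
  exact Subgroup.commutator_le_self Γ hγ

/- Recording the length of a word modulo `|H|` gives a subgroup of `H × ℤ/|H|` projecting onto `H`;
since `H` is perfect it contains `H × 0`. Any letter raised to the power `|H|` is trivial, so words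
of length divisible by `|H|` can be padded to a common length. -/
theorem exists_surjective_wordProd [Finite H] {α : Type*} [Nonempty α] {s : α → H}
    (hs : Subgroup.closure (Set.range s) = ⊤) :
    ∃ m, 0 < m ∧ Function.Surjective (wordProd s : (Fin m → α) → H) := by
  set e := Nat.card H
  have he : 0 < e := Nat.card_pos
  have : NeZero e := ⟨he.ne'⟩
  let t : α → H × Multiplicative (ZMod e) := fun a ↦ (s a, Multiplicative.ofAdd 1)
  have ht : (Subgroup.closure (Set.range t)).map (MonoidHom.fst H _) = ⊤ := by
    rw [MonoidHom.map_closure, ← Set.range_comp, ← hs]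
    rfl
  have hword (h : H) : ∃ (k : ℕ) (w : Fin (e * k) → α), wordProd s w = h := by
    obtain ⟨L, w, hw⟩ := exists_wordProd_eq_of_mem_closure (mk_one_mem_of_map_fst_eq_top ht h)
    have hfst : wordProd s w = h := by
      simpa [map_wordProd, Function.comp_def, t] using congrArg (MonoidHom.fst H _) hw
    have hsnd : Multiplicative.ofAdd (1 : ZMod e) ^ L = 1 := by
      have := congrArg (MonoidHom.snd H _) hw
      rw [map_wordProd] at this
      simpa [wordProd, t, Function.comp_def] using this
    obtain ⟨k, rfl⟩ : e ∣ L := by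
      rw [← ofAdd_nsmul, ofAdd_eq_one, nsmul_one] at hsnd
      exact (ZMod.natCast_eq_zero_iff L e).1 hsnd
    exact ⟨k, w, hfst⟩
  choose k w hw using hword
  obtain ⟨B, hB⟩ := (Set.finite_range k).bddAbove
  obtain ⟨a⟩ := ‹Nonempty α›
  refine ⟨e * (B + 1), by positivity, fun h ↦ ?_⟩
  obtain ⟨c, hc⟩ := Nat.exists_eq_add_of_le ((hB ⟨h, rfl⟩).trans B.le_succ)
  rw [show e * (B + 1) = e * k h + e * c by rw [← mul_add, ← hc]]
  refine ⟨Fin.append (w h) fun _ ↦ a, ?_⟩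
  rw [wordProd_append, wordProd_const, hw, pow_mul, pow_card_eq_one', one_pow, mul_one]

end PerfectGroups

section RightAverage

variable {β H : Type*} [Fintype β] [Group H]

/-- The averaging operator `g ↦ (x ↦ 𝔼 b, g (x * t b))` of a finite family `t` of group elements,
that is, one step of the random walk on `H` whose increments are uniform among the `t b`. -/
noncomputable def rightAverage (t : β → H) (g : H → ℝ) (x : H) : ℝ :=
  𝔼 b, g (x * t b)

theorem iterate_rightAverage (t : β → H) (L : ℕ) :
    (rightAverage t)^[L] = rightAverage (wordProd t : (Fin L → β) → H) := by
  induction L with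
  | zero => ext g x; simp [rightAverage, wordProd]
  | succ L ih =>
    ext g x
    rw [Function.iterate_succ_apply', ih]
    simp only [rightAverage]
    rw [← Fintype.expect_equiv (Fin.consEquiv fun _ : Fin (L + 1) ↦ β)
      (fun p ↦ g (x * (t p.1 * wordProd t p.2))) _ fun p ↦ by simp [Fin.consEquiv, wordProd_cons],
      ← univ_product_univ, expect_product]
    simp only [mul_assoc]

theorem sum_rightAverage [Fintype H] [Nonempty β] (t : β → H) (g : H → ℝ) :
    ∑ x, rightAverage t g x = ∑ x, g x := by
  simp only [rightAverage]
  rw [← expect_sum_comm]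
  exact (expect_congr rfl fun b _ ↦ Equiv.sum_comp (Equiv.mulRight (t b)) g).trans
    (Fintype.expect_const _)

theorem abs_rightAverage_le [Nonempty β] (t : β → H) {g : H → ℝ} {C : ℝ} (hC : ∀ x, |g x| ≤ C)
    (x : H) : |rightAverage t g x| ≤ C :=
  (abs_expect_le _ _).trans (expect_le univ_nonempty fun b _ ↦ hC (x * t b))

/- The values of `g` over a set of representatives of the fibres of `t` cancel, so only the
remaining `|β| - |H|` terms of the average contribute. -/
theorem abs_rightAverage_le_of_surjective [Fintype H] {t : β → H} (ht : Function.Surjective t)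
    {g : H → ℝ} (hg : ∑ x, g x = 0) {C : ℝ} (hC : ∀ x, |g x| ≤ C) (x : H) :
    |rightAverage t g x| ≤ (1 - Fintype.card H / Fintype.card β) * C := by
  classical
  have hβ : 0 < Fintype.card β := Fintype.card_pos_iff.2 ⟨(ht 1).choose⟩
  let r : H ↪ β := ⟨Function.surjInv ht, Function.injective_surjInv ht⟩
  have hrep : ∑ b ∈ univ.map r, g (x * t b) = 0 := by
    simp only [sum_map, r, Function.Embedding.coeFn_mk, Function.surjInv_eq]
    exact (Equiv.sum_comp (Equiv.mulLeft x) g).trans hg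
  have hsum : |∑ b, g (x * t b)| ≤ (Fintype.card β - Fintype.card H) * C := by
    rw [← sum_add_sum_compl (univ.map r), hrep, zero_add]
    calc |∑ b ∈ (univ.map r)ᶜ, g (x * t b)|
        ≤ ∑ b ∈ (univ.map r)ᶜ, |g (x * t b)| := abs_sum_le_sum_abs _ _
      _ ≤ #(univ.map r)ᶜ • C := sum_le_card_nsmul _ _ _ fun b _ ↦ hC _
      _ = (Fintype.card β - Fintype.card H) * C := by
        rw [card_compl, card_map, card_univ, nsmul_eq_mul,
          Nat.cast_sub (Fintype.card_le_of_surjective t ht)]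
  rw [rightAverage, Fintype.expect_eq_sum_div_card, abs_div, Nat.abs_cast,
    div_le_iff₀ (by exact_mod_cast hβ)]
  refine hsum.trans_eq ?_
  field_simp

end RightAverage

section Equidistribution

variable {α H : Type*} [Fintype α] [Nonempty α] [Group H] [Group.IsPerfect H] [Fintype H]
  {s : α → H}

theorem tendsto_iterate_rightAverage_of_sum_eq_zero (hs : Subgroup.closure (Set.range s) = ⊤)
    {g : H → ℝ} (hg : ∑ x, g x = 0) (x : H) :
    Tendsto (fun L ↦ (rightAverage s)^[L] g x) atTop (𝓝 0) := by
  obtain ⟨m, hm, hsurj⟩ := exists_surjective_wordProd hs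
  set ρ : ℝ := 1 - Fintype.card H / Fintype.card (Fin m → α)
  have hρ₀ : 0 ≤ ρ :=
    sub_nonneg.2 <| div_le_one_of_le₀ (by exact_mod_cast Fintype.card_le_of_surjective _ hsurj)
      (Nat.cast_nonneg _)
  have hρ₁ : ρ < 1 := sub_lt_self _ (by have := Fintype.card_pos (α := H); positivity)
  have hsum (L : ℕ) : ∑ y, (rightAverage s)^[L] g y = 0 := by
    rw [iterate_rightAverage, sum_rightAverage, hg]
  have hbound (r j : ℕ) : ∀ y, |(rightAverage s)^[m * j + r] g y| ≤ ρ ^ j * ∑ z, |g z| := by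
    induction j with
    | zero =>
      rw [mul_zero, zero_add, pow_zero, one_mul, iterate_rightAverage]
      exact abs_rightAverage_le _ fun y ↦
        single_le_sum (f := fun z ↦ |g z|) (fun z _ ↦ abs_nonneg (g z)) (mem_univ y)
    | succ j ih =>
      intro y
      rw [show m * (j + 1) + r = m + (m * j + r) by ring, Function.iterate_add_apply,
        iterate_rightAverage s m, pow_succ', mul_assoc]
      exact abs_rightAverage_le_of_surjective hsurj (hsum _) ih y
  refine squeeze_zero_norm (a := fun L ↦ ρ ^ (L / m) * ∑ z, |g z|) (fun L ↦ ?_) ?_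
  · simpa only [Nat.div_add_mod, Real.norm_eq_abs] using hbound (L % m) (L / m) x
  · simpa using ((tendsto_pow_atTop_nhds_zero_of_lt_one hρ₀ hρ₁).comp
      (Nat.tendsto_div_const_atTop hm.ne')).mul_const _

open scoped Classical in
theorem tendsto_wordProportion (hs : Subgroup.closure (Set.range s) = ⊤) (P : H → Prop) :
    Tendsto (wordProportion s P) atTop (𝓝 (#{h | P h} / Fintype.card H)) := by
  set μ : ℝ := #{h | P h} / Fintype.card H with hμ
  let g : H → ℝ := fun h ↦ (if P h then 1 else 0) - μ
  have hg : ∑ h, g h = 0 := by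
    simp [g, sum_sub_distrib, hμ, mul_div_cancel₀]
  have hprop (L : ℕ) : (rightAverage s)^[L] g 1 = wordProportion s P L - μ := by
    simp [iterate_rightAverage, rightAverage, g, expect_sub_distrib, wordProportion,
      Fintype.expect_eq_sum_div_card]
  have := (tendsto_iterate_rightAverage_of_sum_eq_zero hs hg 1).add_const μ
  simpa only [hprop, sub_add_cancel, zero_add] using this

end Equidistribution

section SpecialLinear

open Matrix Matrix.SpecialLinearGroup

theorem exists_fin_two_sum_equiv {ι : Type*} [Finite ι] {i j : ι} (hij : i ≠ j) :
    ∃ (t : Finset ι) (e : Fin 2 ⊕ t ≃ ι), e (.inl 0) = i ∧ e (.inl 1) = j := by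
  classical
  have := Fintype.ofFinite ι
  refine ⟨{i, j}ᶜ, Equiv.ofBijective (Sum.elim ![i, j] Subtype.val) ⟨?_, fun k ↦ ?_⟩, rfl, rfl⟩
  · refine Function.Injective.sumElim ?_ Subtype.val_injective ?_
    · simp [Fin.forall_fin_two, Function.Injective, hij, hij.symm]
    · simp only [Subtype.forall, mem_compl, mem_insert, mem_singleton, not_or]
      rw [Fin.forall_fin_two]
      simp +contextual [eq_comm]
  · by_cases hk : k ∈ ({i, j} : Finset ι)
    · rcases mem_insert.1 hk with rfl | hk
      · exact ⟨.inl 0, rfl⟩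
      · exact ⟨.inl 1, (mem_singleton.1 hk).symm⟩
    · exact ⟨.inr ⟨k, mem_compl.2 hk⟩, rfl⟩

variable {ι κ μ : Type*} [Fintype ι] [DecidableEq ι] [Fintype κ] [DecidableEq κ]
  [Fintype μ] [DecidableEq μ]

/-- The embedding `SL(κ, R) → SL(ι, R)` that acts on the coordinates in `κ` and fixes the
complementary coordinates in `μ`. -/
def blockEmbedding {R : Type*} [CommRing R] (e : κ ⊕ μ ≃ ι) :
    SpecialLinearGroup κ R →* SpecialLinearGroup ι R where
  toFun A := ⟨reindex e e (fromBlocks A 0 0 1), by simp⟩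
  map_one' := by ext; simp [Matrix.one_apply]
  map_mul' A B := Subtype.ext <| by
    change reindex e e _ = reindex e e _ * reindex e e _
    simp [fromBlocks_multiply]

theorem coe_blockEmbedding {R : Type*} [CommRing R] (e : κ ⊕ μ ≃ ι)
    (A : SpecialLinearGroup κ R) :
    (blockEmbedding e A : Matrix ι ι R) = reindex e e (fromBlocks A 0 0 1) :=
  rfl

theorem blockEmbedding_transvection {R : Type*} [CommRing R] (e : κ ⊕ μ ≃ ι) {i j : κ}
    (hij : i ≠ j) (c : R) :
    blockEmbedding e (SpecialLinearGroup.transvection hij c) =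
      SpecialLinearGroup.transvection (e.injective.ne (Sum.inl_injective.ne hij)) c := by
  ext k l
  obtain ⟨k, rfl⟩ := e.surjective k
  obtain ⟨l, rfl⟩ := e.surjective l
  rcases k with k | k <;> rcases l with l | l <;>
    simp [coe_blockEmbedding, transvection_coe, Matrix.one_apply, Matrix.single_apply]

variable {F : Type*} [Field F]

theorem blockEmbedding_diag2n (e : κ ⊕ μ ≃ ι) {i j : κ} (hij : i ≠ j) {c : F} (hc : c ≠ 0) :
    blockEmbedding e (diag2n hij c hc) =
      diag2n (e.injective.ne (Sum.inl_injective.ne hij)) c hc := by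
  ext k l
  obtain ⟨k, rfl⟩ := e.surjective k
  obtain ⟨l, rfl⟩ := e.surjective l
  rcases k with k | k <;> rcases l with l | l <;>
    simp [coe_blockEmbedding, diag2n_coe, Matrix.one_apply, Matrix.diagonal_apply]

theorem subgroup_eq_top_of_transvection_mem [Nontrivial ι] {K : Subgroup (SpecialLinearGroup ι F)}
    (hK : ∀ (i j : ι) (hij : i ≠ j) (c : F), SpecialLinearGroup.transvection hij c ∈ K) :
    K = ⊤ := by
  refine eq_top_iff.2 fun A _ ↦ diagonal_transvection_induction' (· ∈ K) A
    (fun i j hij c hc ↦ ?_) hK fun _ _ ↦ mul_mem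
  obtain ⟨t, e, rfl, rfl⟩ := exists_fin_two_sum_equiv hij
  rw [← blockEmbedding_diag2n e zero_ne_one hc]
  refine SL2.transvection_induction (blockEmbedding e · ∈ K) (fun k l hkl d ↦ ?_)
    (fun A B hA hB ↦ by rw [map_mul]; exact mul_mem hA hB) _
  rw [blockEmbedding_transvection]
  exact hK _ _ _ _

theorem isPerfect_specialLinearGroup [Nontrivial ι] {a : F} (ha : a ≠ 0) (ha' : a ^ 2 ≠ 1) :
    Group.IsPerfect (SpecialLinearGroup ι F) := by
  refine ⟨subgroup_eq_top_of_transvection_mem fun i j hij c ↦ ?_⟩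
  obtain ⟨t, e, rfl, rfl⟩ := exists_fin_two_sum_equiv hij
  rw [← blockEmbedding_transvection e zero_ne_one]
  have hmem : SpecialLinearGroup.transvection zero_ne_one c ∈
      commutator (SpecialLinearGroup (Fin 2) F) :=
    SL2.commutator_eq_top ha ha' ▸ Subgroup.mem_top _
  have hle : (commutator _).map (blockEmbedding e) ≤ commutator (SpecialLinearGroup ι F) := by
    rw [commutator_def, Subgroup.map_commutator]
    exact Subgroup.commutator_mono le_top le_top
  exact hle (Subgroup.mem_map_of_mem _ hmem)

theorem isPerfect_specialLinearGroup_zmod [Nontrivial ι] {p : ℕ} [Fact p.Prime] (hp : 3 < p) :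
    Group.IsPerfect (SpecialLinearGroup ι (ZMod p)) := by
  have hne {m : ℕ} (hm : 0 < m) (hmp : m < p) : (m : ZMod p) ≠ 0 := fun h ↦
    Nat.not_dvd_of_pos_of_lt hm hmp ((ZMod.natCast_eq_zero_iff m p).1 h)
  refine isPerfect_specialLinearGroup (a := 2)
    (by exact_mod_cast hne two_pos (by lia)) fun h ↦ ?_
  exact hne three_pos hp (by push_cast; linear_combination h)

theorem map_intCast_zmod_surjective [Nontrivial ι] (p : ℕ) [Fact p.Prime] :
    Function.Surjective
      (SpecialLinearGroup.map (Int.castRingHom (ZMod p)) :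
        SpecialLinearGroup ι ℤ → SpecialLinearGroup ι (ZMod p)) := by
  rw [← MonoidHom.range_eq_top]
  refine subgroup_eq_top_of_transvection_mem fun i j hij c ↦ ?_
  obtain ⟨m, rfl⟩ := ZMod.intCast_surjective c
  refine ⟨SpecialLinearGroup.transvection hij m, ?_⟩
  ext k l
  simp only [SpecialLinearGroup.map_apply_coe, RingHom.mapMatrix_apply, transvection_coe,
    Matrix.map_apply, Matrix.add_apply, Matrix.one_apply, Matrix.single_apply, eq_intCast]
  split_ifs <;> simp

end SpecialLinear

section MatrixPolynomials

open MvPolynomial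

variable {ι R : Type*} [CommRing R]

/-- Evaluation at a square matrix `A` of polynomials in the matrix entries: the variable indexed by
`(i, j)` takes the value `A i j`. -/
noncomputable abbrev entryEval (A : Matrix ι ι R) : MvPolynomial (ι × ι) R →+* R :=
  MvPolynomial.eval fun e ↦ A e.1 e.2

theorem entryEval_map {S : Type*} [CommRing S] (f : R →+* S) (A : Matrix ι ι R)
    (Q : MvPolynomial (ι × ι) R) :
    entryEval (A.map f) (MvPolynomial.map f Q) = f (entryEval A Q) := by
  simp only [entryEval, map_eval, Function.comp_def, Matrix.map_apply]

theorem mapMatrix_entryEval_mvPolynomialX [Fintype ι] [DecidableEq ι] (A : Matrix ι ι R) :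
    (entryEval A).mapMatrix (Matrix.mvPolynomialX ι ι R) = A :=
  Matrix.mvPolynomialX_mapMatrix_eval A

theorem entryEval_det_mvPolynomialX [Fintype ι] [DecidableEq ι] (A : Matrix ι ι R) :
    entryEval A (Matrix.mvPolynomialX ι ι R).det = A.det := by
  rw [RingHom.map_det, mapMatrix_entryEval_mvPolynomialX]

theorem eval_mul_of_isHomogeneous {σ : Type*} {Q : MvPolynomial σ R} {d : ℕ}
    (hQ : Q.IsHomogeneous d) (c : R) (x : σ → R) :
    eval (fun i ↦ c * x i) Q = c ^ d * eval x Q := by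
  simp only [eval_eq, mul_sum]
  refine sum_congr rfl fun e he ↦ ?_
  rw [← hQ (mem_support_iff.1 he), prod_congr rfl fun i _ ↦ mul_pow c (x i) (e i), prod_mul_distrib,
    prod_pow_eq_pow_sum, Finsupp.weight_apply, Finsupp.sum]
  simp only [Pi.one_apply, smul_eq_mul, mul_one]
  ring

theorem isHomogeneous_det {κ σ : Type*} [Fintype κ] [DecidableEq κ]
    {A : Matrix κ κ (MvPolynomial σ R)} {d : ℕ} (hA : ∀ i j, (A i j).IsHomogeneous d) :
    A.det.IsHomogeneous (d * Fintype.card κ) := by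
  rw [Matrix.det_apply]
  refine IsHomogeneous.sum _ _ _ fun g _ ↦ ?_
  have hprod : (∏ i, A (g i) i).IsHomogeneous (d * Fintype.card κ) := by
    simpa [mul_comm] using IsHomogeneous.prod univ (fun i ↦ A (g i) i) (fun _ ↦ d) fun i _ ↦ hA _ _
  rcases Int.units_eq_one_or (Equiv.Perm.sign g) with h | h
  · simpa [h] using hprod
  · simpa [h] using hprod.neg

theorem isHomogeneous_det_mvPolynomialX [Fintype ι] [DecidableEq ι] :
    (Matrix.mvPolynomialX ι ι R).det.IsHomogeneous (Fintype.card ι) := by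
  simpa only [one_mul] using
    isHomogeneous_det (A := Matrix.mvPolynomialX ι ι R) fun i j ↦ isHomogeneous_X R (i, j)

theorem isHomogeneous_matrix_pow {σ : Type*} [Fintype ι] [DecidableEq ι]
    {A : Matrix ι ι (MvPolynomial σ R)} {d : ℕ} (hA : ∀ i j, (A i j).IsHomogeneous d) (N : ℕ)
    (i j : ι) :
    ((A ^ N) i j).IsHomogeneous (d * N) := by
  induction N generalizing i j with
  | zero =>
    rw [pow_zero, Matrix.one_apply]
    split_ifs
    exacts [isHomogeneous_one _ _, isHomogeneous_zero _ _ _]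
  | succ N ih =>
    rw [pow_succ, Matrix.mul_apply]
    exact IsHomogeneous.sum _ _ _ fun k _ ↦ (ih i k).mul (hA k j)

end MatrixPolynomials

section Counting

open MvPolynomial

variable {F : Type*} [Field F] [Fintype F] [DecidableEq F]

theorem card_zeros_mul_card_le {σ : Type*} [Fintype σ] [DecidableEq σ] {Q : MvPolynomial σ F}
    (hQ : Q ≠ 0) :
    #{x : σ → F | eval x Q = 0} * Fintype.card F ≤
      Q.totalDegree * Fintype.card F ^ Fintype.card σ := by
  let e := Fintype.equivFin σ
  have hcard : #{x : σ → F | eval x Q = 0} =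
      #{y ∈ Fintype.piFinset fun _ : Fin (Fintype.card σ) ↦ (univ : Finset F) |
        eval y (renameEquiv F e Q) = 0} := by
    refine card_equiv (e.arrowCongr (Equiv.refl F)) fun x ↦ ?_
    simp [eval_rename, Function.comp_def]
  have hbound := schwartz_zippel_totalDegree ((renameEquiv F e).injective.ne hQ |>.trans_eq
    (map_zero _)) univ
  rw [← hcard, totalDegree_renameEquiv, card_univ, div_le_div_iff₀ (by positivity) (by positivity)]
    at hbound
  exact_mod_cast hbound

variable {ι : Type*} [Fintype ι] [DecidableEq ι]

theorem card_matrix_zeros_mul_card_le {Q : MvPolynomial (ι × ι) F} {d : ℕ} (hQ : Q ≠ 0)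
    (hd : Q.IsHomogeneous d) :
    #{A : Matrix ι ι F | entryEval A Q = 0} * Fintype.card F ≤
      d * Fintype.card (Matrix ι ι F) := by
  let e : Matrix ι ι F ≃ (ι × ι → F) := (Equiv.curry ι ι F).symm
  have hcard : #{A : Matrix ι ι F | entryEval A Q = 0} = #{x : ι × ι → F | eval x Q = 0} :=
    card_equiv e fun A ↦ by simp only [mem_filter, mem_univ, true_and]; rfl
  have hM : Fintype.card (Matrix ι ι F) = Fintype.card F ^ Fintype.card (ι × ι) :=
    (Fintype.card_congr e).trans Fintype.card_fun
  rw [hcard, hM]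
  refine (card_zeros_mul_card_le hQ).trans ?_
  gcongr
  exact hd.totalDegree_le

theorem card_units_mul_card_zeros_le [Nonempty ι] {Q : MvPolynomial (ι × ι) F} {d : ℕ}
    (hd : Q.IsHomogeneous d) :
    Fintype.card Fˣ * #{A : Matrix.SpecialLinearGroup ι F | entryEval A.1 Q = 0} ≤
      Fintype.card ι * #{A : Matrix ι ι F | entryEval A Q = 0} := by
  rw [← card_univ, ← card_product]
  refine card_le_mul_card_image_of_maps_to (f := fun x ↦ (x.1 : F) • x.2.1) (fun x hx ↦ ?_) _
    fun B _ ↦ ?_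
  · have h : entryEval x.2.1 Q = 0 := (mem_filter.1 (mem_product.1 hx).2).2
    simp [entryEval, eval_mul_of_isHomogeneous hd, h]
  · refine (card_le_card_of_injOn (fun x ↦ (x.1 : F))
      (t := (Polynomial.nthRoots (Fintype.card ι) B.det).toFinset) (fun x hx ↦ ?_) ?_).trans
      ((Multiset.toFinset_card_le _).trans (Polynomial.card_nthRoots _ _))
    · obtain rfl := (mem_filter.1 hx).2
      simp [Polynomial.mem_nthRoots Fintype.card_pos]
    · rintro ⟨c, A⟩ hA ⟨c', A'⟩ hA' hcc'
      obtain rfl := Units.ext hcc'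
      have := (mem_filter.1 hA).2.trans (mem_filter.1 hA').2.symm
      rw [Prod.mk.injEq]
      exact ⟨rfl, Subtype.ext (smul_right_injective _ c.ne_zero this)⟩

theorem card_det_ne_zero_le :
    #{A : Matrix ι ι F | A.det ≠ 0} ≤
      Fintype.card Fˣ * Fintype.card (Matrix.SpecialLinearGroup ι F) := by
  let det : GL ι F →* Fˣ := Matrix.GeneralLinearGroup.det
  have hGL : #{A : Matrix ι ι F | A.det ≠ 0} ≤ Nat.card (GL ι F) := by
    rw [Nat.card_eq_fintype_card, ← card_univ]
    exact card_le_card_of_surjOn Units.val fun A hA ↦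
      ⟨.mkOfDetNeZero A (mem_filter.1 hA).2, mem_univ _, rfl⟩
  have hker : Nat.card det.ker ≤ Nat.card (Matrix.SpecialLinearGroup ι F) :=
    Nat.card_le_card_of_injective (fun A ↦ ⟨A.1.1, congrArg Units.val A.2⟩) fun A B h ↦
      Subtype.ext (Units.ext (congrArg Subtype.val h))
  calc #{A : Matrix ι ι F | A.det ≠ 0}
      ≤ Nat.card (GL ι F) := hGL
    _ = Nat.card det.range * Nat.card det.ker := by
      rw [← Subgroup.index_ker, mul_comm, Subgroup.card_mul_index]
    _ ≤ Nat.card Fˣ * Nat.card (Matrix.SpecialLinearGroup ι F) :=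
      Nat.mul_le_mul (Subgroup.card_le_card_group _) hker
    _ = _ := by rw [Nat.card_eq_fintype_card, Nat.card_eq_fintype_card]

theorem card_matrix_mul_card_le :
    Fintype.card (Matrix ι ι F) * Fintype.card F ≤
      Fintype.card ι * Fintype.card (Matrix ι ι F) +
        Fintype.card Fˣ * Fintype.card (Matrix.SpecialLinearGroup ι F) * Fintype.card F := by
  have hzeros := card_matrix_zeros_mul_card_le (Matrix.det_mvPolynomialX_ne_zero ι F)
    isHomogeneous_det_mvPolynomialX
  simp only [entryEval_det_mvPolynomialX] at hzeros
  calc Fintype.card (Matrix ι ι F) * Fintype.card F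
      = #{A : Matrix ι ι F | A.det = 0} * Fintype.card F +
          #{A : Matrix ι ι F | A.det ≠ 0} * Fintype.card F := by
        rw [← add_mul, card_filter_add_card_filter_not, card_univ]
    _ ≤ _ := Nat.add_le_add hzeros (Nat.mul_le_mul_right _ card_det_ne_zero_le)

theorem card_specialLinearGroup_zeros_mul_card_le [Nonempty ι] {Q : MvPolynomial (ι × ι) F} {d : ℕ}
    (hQ : Q ≠ 0) (hd : Q.IsHomogeneous d) :
    #{A : Matrix.SpecialLinearGroup ι F | entryEval A.1 Q = 0} * Fintype.card F ≤
      Fintype.card ι * (d + 1) * Fintype.card (Matrix.SpecialLinearGroup ι F) := by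
  set B := #{A : Matrix.SpecialLinearGroup ι F | entryEval A.1 Q = 0}
  set G := Fintype.card (Matrix.SpecialLinearGroup ι F)
  set M := Fintype.card (Matrix ι ι F)
  set q := Fintype.card F
  set n := Fintype.card ι
  have hB : B ≤ G := card_le_univ _
  have hscale : Fintype.card Fˣ * B * q ≤ n * (d * M) :=
    (Nat.mul_le_mul_right q (card_units_mul_card_zeros_le hd)).trans <| by
      rw [mul_assoc]
      exact Nat.mul_le_mul_left n (card_matrix_zeros_mul_card_le hQ hd)
  refine Nat.le_of_mul_le_mul_left (c := M) ?_ Fintype.card_pos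
  calc M * (B * q) = B * (M * q) := by ring
    _ ≤ B * (n * M + Fintype.card Fˣ * G * q) := Nat.mul_le_mul_left B card_matrix_mul_card_le
    _ = n * M * B + Fintype.card Fˣ * B * q * G := by ring
    _ ≤ n * M * G + n * (d * M) * G := by gcongr
    _ = M * (n * (d + 1) * G) := by ring

end Counting

section ZeroAvoidance

open MvPolynomial

variable {ι : Type*} [Fintype ι] [DecidableEq ι] {α : Type*}

/-- The primes `p` such that the family `s` of elements of `SL(ι, ℤ)` generates `SL(ι, ℤ/p)` after
reduction modulo `p`. -/
def generatingPrimes (s : α → Matrix.SpecialLinearGroup ι ℤ) : Set ℕ :=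
  {p | p.Prime ∧ Subgroup.closure
    (Set.range (Matrix.SpecialLinearGroup.map (Int.castRingHom (ZMod p)) ∘ s)) = ⊤}

theorem infinite_generatingPrimes_of_closure_eq_top [Nontrivial ι]
    {s : α → Matrix.SpecialLinearGroup ι ℤ} (hs : Subgroup.closure (Set.range s) = ⊤) :
    (generatingPrimes s).Infinite := by
  refine Nat.infinite_setOfPred_prime.mono fun p (hp : p.Prime) ↦ ⟨hp, ?_⟩
  have : Fact p.Prime := ⟨hp⟩
  rw [Set.range_comp, ← MonoidHom.map_closure, hs,
    Subgroup.map_top_of_surjective _ (map_intCast_zmod_surjective p)]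

theorem nonempty_of_generatingPrimes_nonempty [Nontrivial ι]
    {s : α → Matrix.SpecialLinearGroup ι ℤ} (hs : (generatingPrimes s).Nonempty) : Nonempty α := by
  obtain ⟨p, hp, hgen⟩ := hs
  have : Fact p.Prime := ⟨hp⟩
  by_contra hα
  rw [not_nonempty_iff] at hα
  rw [Set.range_eq_empty, Subgroup.closure_empty] at hgen
  obtain ⟨i, j, hij⟩ := exists_pair_ne ι
  have h : Matrix.SpecialLinearGroup.transvection hij (1 : ZMod p) = 1 :=
    Subgroup.mem_bot.1 (hgen ▸ Subgroup.mem_top _)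
  simpa [Matrix.SpecialLinearGroup.transvection_coe, hij] using
    congrArg (fun A : Matrix.SpecialLinearGroup ι (ZMod p) ↦ A i j) h

theorem map_intCast_zmod_ne_zero {σ : Type*} {Q : MvPolynomial σ ℤ} {m : σ →₀ ℕ} {p : ℕ}
    (hm : Q.coeff m ≠ 0) (hp : (Q.coeff m).natAbs < p) :
    MvPolynomial.map (Int.castRingHom (ZMod p)) Q ≠ 0 := fun h ↦ by
  have hdvd : (p : ℤ) ∣ Q.coeff m := by
    rw [← ZMod.intCast_zmod_eq_zero_iff_dvd, ← eq_intCast (Int.castRingHom (ZMod p)), ← coeff_map,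
      h, coeff_zero]
  exact hm (Int.eq_zero_of_dvd_of_natAbs_lt_natAbs hdvd hp)

theorem exists_le_tendsto_wordProportion_zmod [Nontrivial ι] [Fintype α] [Nonempty α] {p : ℕ}
    [Fact p.Prime] (hp : 3 < p) {s : α → Matrix.SpecialLinearGroup ι (ZMod p)}
    (hs : Subgroup.closure (Set.range s) = ⊤) {Q : MvPolynomial (ι × ι) (ZMod p)} {d : ℕ}
    (hQ : Q ≠ 0) (hd : Q.IsHomogeneous d) :
    ∃ δ ≤ (Fintype.card ι * (d + 1) / p : ℝ),
      Tendsto (wordProportion s fun A ↦ entryEval A.1 Q = 0) atTop (𝓝 δ) := by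
  have := isPerfect_specialLinearGroup_zmod (ι := ι) hp
  refine ⟨_, ?_, tendsto_wordProportion hs _⟩
  rw [div_le_div_iff₀ (by positivity) (by exact_mod_cast (Fact.out : p.Prime).pos)]
  have := card_specialLinearGroup_zeros_mul_card_le hQ hd
  rw [ZMod.card] at this
  convert (Nat.cast_le (α := ℝ)).2 this using 1 <;> push_cast <;> congr!

theorem tendsto_wordProportion_entryEval_eq_zero [Nontrivial ι] [Fintype α] [Nonempty α]
    {s : α → Matrix.SpecialLinearGroup ι ℤ} (hs : (generatingPrimes s).Infinite)
    {Q : MvPolynomial (ι × ι) ℤ} {d : ℕ} (hQ : Q ≠ 0) (hd : Q.IsHomogeneous d) :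
    Tendsto (wordProportion s fun A ↦ entryEval A.1 Q = 0) atTop (𝓝 0) := by
  refine tendsto_order.2 ⟨fun a ha ↦ .of_forall fun L ↦ ha.trans_le (wordProportion_nonneg _ _ _),
    fun ε hε ↦ ?_⟩
  obtain ⟨m, hm⟩ := MvPolynomial.ne_zero_iff.1 hQ
  obtain ⟨N, hN⟩ := exists_nat_gt (Fintype.card ι * (d + 1) / ε)
  obtain ⟨p, ⟨hp, hgen⟩, hpN⟩ := hs.exists_gt (max N (max 3 (Q.coeff m).natAbs))
  simp only [max_lt_iff] at hpN
  have : Fact p.Prime := ⟨hp⟩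
  obtain ⟨δ, hδ, hlim⟩ := exists_le_tendsto_wordProportion_zmod hpN.2.1 hgen
    (map_intCast_zmod_ne_zero hm hpN.2.2) (hd.map _)
  have hδε : δ < ε := by
    refine hδ.trans_lt ((div_lt_comm₀ (by exact_mod_cast hp.pos) hε).2 (hN.trans ?_))
    exact_mod_cast hpN.1
  filter_upwards [hlim.eventually_lt_const hδε] with L hL
  refine lt_of_le_of_lt ?_ hL
  rw [← wordProportion_comp_monoidHom]
  refine wordProportion_mono _ _ fun A hA ↦ ?_
  rw [Matrix.SpecialLinearGroup.map_apply_coe, RingHom.mapMatrix_apply, entryEval_map, hA, map_zero]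

end ZeroAvoidance

section TensorPower

open Matrix MvPolynomial

variable {ι κ R S : Type*} [Fintype κ] [CommRing R] [CommRing S]

variable (κ) in
/-- The matrix of the `κ`-fold tensor power of the endomorphism `A` of `ι → R`, in the basis of
pure tensors of standard basis vectors, which is indexed by the functions `κ → ι`. -/
def tensorPow (A : Matrix ι ι R) : Matrix (κ → ι) (κ → ι) R :=
  of fun φ ψ ↦ ∏ j, A (φ j) (ψ j)

theorem tensorPow_map (f : R →+* S) (A : Matrix ι ι R) :
    tensorPow κ (A.map f) = (tensorPow κ A).map f := by
  ext φ ψ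
  simp [tensorPow]

theorem isHomogeneous_tensorPow_mvPolynomialX (φ ψ : κ → ι) :
    (tensorPow κ (mvPolynomialX ι ι R) φ ψ).IsHomogeneous (Fintype.card κ) := by
  simpa [tensorPow] using IsHomogeneous.prod univ (fun j ↦ (X (φ j, ψ j) : MvPolynomial (ι × ι) R))
    (fun _ ↦ 1) fun j _ ↦ isHomogeneous_X R _

theorem tensorPow_diagonal [DecidableEq ι] (a : ι → R) :
    tensorPow κ (diagonal a) = diagonal fun φ ↦ ∏ j, a (φ j) := by
  ext φ ψ
  by_cases h : φ = ψ
  · subst h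
    simp [tensorPow]
  · obtain ⟨j, hj⟩ := Function.ne_iff.1 h
    rw [diagonal_apply_ne _ h]
    exact prod_eq_zero (mem_univ j) (diagonal_apply_ne _ hj)

variable [Fintype ι] [DecidableEq κ]

theorem tensorPow_mulVec (A : Matrix ι ι R) (v : κ → ι → R) :
    (tensorPow κ A *ᵥ fun ψ ↦ ∏ j, v j (ψ j)) = fun φ ↦ ∏ j, (A *ᵥ v j) (φ j) := by
  ext φ
  simp only [mulVec, dotProduct, tensorPow, of_apply, prod_univ_sum, Fintype.piFinset_univ,
    prod_mul_distrib]

variable [DecidableEq ι]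

theorem prod_mem_spectrum_tensorPow {F : Type*} [Field F] {A : Matrix ι ι F} {μ : κ → F}
    (hμ : ∀ j, μ j ∈ spectrum F A) : ∏ j, μ j ∈ spectrum F (tensorPow κ A) := by
  simp only [← spectrum_toLin', ← Module.End.hasEigenvalue_iff_mem_spectrum] at hμ ⊢
  choose v hv using fun j ↦ (hμ j).exists_hasEigenvector
  have hAv (j : κ) : A *ᵥ v j = μ j • v j := (hv j).apply_eq_smul
  choose φ hφ using fun j ↦ Function.ne_iff.1 (hv j).2
  refine Module.End.hasEigenvalue_of_hasEigenvector (x := fun ψ ↦ ∏ j, v j (ψ j))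
    ⟨Module.End.mem_eigenspace_iff.2 ?_, Function.ne_iff.2 ⟨φ, prod_ne_zero_iff.2 fun j _ ↦ hφ j⟩⟩
  ext ψ
  simp [tensorPow_mulVec, hAv, prod_mul_distrib]

variable (κ) in
/-- The determinant of `(A^{⊗κ}) ^ (|ι| * N) - det A ^ (|κ| * N)`. On matrices `A` of determinant
one it vanishes as soon as some product of `|κ|` eigenvalues of `A` has order dividing `N`. The
scalar `det A ^ (|κ| * N)` is inserted to make it a homogeneous polynomial in the entries of `A`. -/
def tensorPowTest (N : ℕ) (A : Matrix ι ι R) : R :=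
  det (tensorPow κ A ^ (Fintype.card ι * N) - A.det ^ (Fintype.card κ * N) • 1)

theorem tensorPowTest_map (f : R →+* S) (N : ℕ) (A : Matrix ι ι R) :
    tensorPowTest κ N (A.map f) = f (tensorPowTest κ N A) := by
  rw [tensorPowTest, tensorPowTest, RingHom.map_det, tensorPow_map, ← RingHom.mapMatrix_apply,
    ← RingHom.mapMatrix_apply, ← RingHom.map_det, map_sub, map_pow, smul_one_eq_diagonal,
    smul_one_eq_diagonal, RingHom.mapMatrix_apply (M := diagonal _), diagonal_map (map_zero f)]
  simp only [map_pow]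

theorem isHomogeneous_tensorPowTest_mvPolynomialX (N : ℕ) :
    (tensorPowTest κ N (mvPolynomialX ι ι R)).IsHomogeneous
      (Fintype.card κ * (Fintype.card ι * N) * Fintype.card (κ → ι)) := by
  refine isHomogeneous_det fun φ ψ ↦ ?_
  refine (isHomogeneous_matrix_pow isHomogeneous_tensorPow_mvPolynomialX _ φ ψ).sub ?_
  rw [Matrix.smul_apply, Matrix.one_apply, smul_eq_mul]
  split_ifs
  · rw [mul_one, mul_left_comm]
    exact isHomogeneous_det_mvPolynomialX.pow _
  · rw [mul_zero]
    exact isHomogeneous_zero _ _ _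

/- On a diagonal matrix of indeterminates the test function is the product over `φ : κ → ι` of
`(∏ j, X (φ j)) ^ (|ι| * N) - (∏ i, X i) ^ (|κ| * N)`. As `φ` misses some index `i`, setting `X i`
to zero kills the second monomial only. -/
theorem tensorPowTest_mvPolynomialX_ne_zero [IsDomain R] [Nonempty κ]
    (hκ : Fintype.card κ < Fintype.card ι) {N : ℕ} (hN : N ≠ 0) :
    tensorPowTest κ N (mvPolynomialX ι ι R) ≠ 0 := by
  let D : Matrix ι ι (MvPolynomial ι R) := diagonal X
  suffices hD : tensorPowTest κ N D ≠ 0 by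
    intro h
    let f : MvPolynomial (ι × ι) R →+* MvPolynomial ι R :=
      (aeval fun e : ι × ι ↦ D e.1 e.2).toRingHom
    have hf : (mvPolynomialX ι ι R).map f = D := mvPolynomialX_mapMatrix_aeval R D
    rw [← hf, tensorPowTest_map, h, map_zero] at hD
    exact hD rfl
  rw [tensorPowTest, tensorPow_diagonal, diagonal_pow, smul_one_eq_diagonal, diagonal_sub,
    det_diagonal, det_diagonal, prod_ne_zero_iff]
  rintro φ - h
  obtain ⟨i, hi⟩ : ∃ i, ∀ j, φ j ≠ i := by
    by_contra! hφ
    exact hκ.not_ge (Fintype.card_le_of_surjective φ hφ)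
  have := congrArg (eval fun k ↦ if k = i then 0 else 1) h
  simp [hi, prod_ite_eq', Fintype.card_ne_zero, hN] at this

end TensorPower

section RootsOfUnity

open Nat Polynomial

theorem dvd_factorial_two_mul_totient {n : ℕ} (hn : 0 < n) : n ∣ (2 * φ n)! := by
  rw [Nat.dvd_iff_prime_pow_dvd_dvd]
  intro p k hp hpk
  rcases k.eq_zero_or_pos with rfl | hk
  · simp
  refine Nat.dvd_factorial (pow_pos hp.pos k) ?_
  calc p ^ k = p ^ (k - 1) * p := by rw [← pow_succ, Nat.sub_add_cancel hk]
    _ ≤ p ^ (k - 1) * (2 * (p - 1)) := Nat.mul_le_mul_left _ (by have := hp.two_le; lia)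
    _ = 2 * φ (p ^ k) := by rw [Nat.totient_prime_pow hp hk, mul_left_comm]
    _ ≤ 2 * φ n := Nat.mul_le_mul_left 2 <|
      Nat.le_of_dvd (Nat.totient_pos.2 hn) (Nat.totient_dvd_of_dvd hpk)

theorem pow_factorial_natDegree_eq_one {F : Type*} [Field F] [CharZero F] {ζ : F}
    (hζ : IsOfFinOrder ζ) {P : ℤ[X]} (hP : P ≠ 0) (hroot : aeval ζ P = 0) :
    ζ ^ (2 * P.natDegree)! = 1 := by
  have hprim := IsPrimitiveRoot.orderOf ζ
  have hdvd : minpoly ℤ ζ ∣ P :=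
    minpoly.isIntegrallyClosed_dvd (hprim.isIntegral hζ.orderOf_pos) hroot
  have hdeg : φ (orderOf ζ) ≤ P.natDegree := by
    rw [← natDegree_cyclotomic (orderOf ζ) ℤ, cyclotomic_eq_minpoly hprim hζ.orderOf_pos]
    exact natDegree_le_of_dvd hdvd hP
  rw [← orderOf_dvd_iff_pow_eq_one]
  exact (dvd_factorial_two_mul_totient hζ.orderOf_pos).trans
    (Nat.factorial_dvd_factorial (Nat.mul_le_mul_left 2 hdeg))

end RootsOfUnity

section TestVanishing

open Matrix Polynomial

variable {ι κ F : Type*} [Fintype ι] [DecidableEq ι] [Fintype κ] [DecidableEq κ] [Field F]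

theorem det_pow_sub_one_eq_zero {A : Matrix ι ι F} {ζ : F} (hζ : ζ ∈ spectrum F A) {N : ℕ}
    (hN : ζ ^ N = 1) : (A ^ N - 1).det = 0 := by
  have hone : (1 : F) ∈ spectrum F (A ^ N) := hN ▸ spectrum.pow_mem_pow A N hζ
  rw [mem_spectrum_iff_isRoot_charpoly, IsRoot, eval_charpoly, map_one] at hone
  rw [← neg_sub, det_neg, hone, mul_zero]

theorem tensorPowTest_eq_zero_of_isOfFinOrder [CharZero F] {A : Matrix ι ι ℤ} (hA : A.det = 1)
    {μ : κ → F} (hμ : ∀ j, μ j ∈ spectrum F (A.map (Int.castRingHom F)))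
    (hfin : IsOfFinOrder (∏ j, μ j)) :
    tensorPowTest κ (2 * Fintype.card (κ → ι)).factorial A = 0 := by
  have hmem := prod_mem_spectrum_tensorPow hμ
  have hroot : aeval (∏ j, μ j) (tensorPow κ A).charpoly = 0 := by
    rw [tensorPow_map, mem_spectrum_iff_isRoot_charpoly, charpoly_map, IsRoot, eval_map] at hmem
    exact hmem
  have hpow := pow_factorial_natDegree_eq_one hfin (charpoly_monic (tensorPow κ A)).ne_zero hroot
  rw [charpoly_natDegree_eq_dim] at hpow
  have hdet : (A.map (Int.castRingHom F)).det = 1 := by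
    rw [← RingHom.mapMatrix_apply, ← RingHom.map_det, hA, map_one]
  apply (Int.castRingHom F).injective_int
  rw [map_zero, ← tensorPowTest_map, tensorPowTest, hdet, one_pow, one_smul]
  exact det_pow_sub_one_eq_zero hmem (by rw [pow_mul', hpow, one_pow])

end TestVanishing

section ReducibleCharpoly

open Matrix Polynomial

theorem exists_monic_dvd_of_not_irreducible_map {P : ℤ[X]} (hP : P.Monic) (hP₁ : P ≠ 1)
    (hunit : IsUnit (P.coeff 0)) (hirr : ¬ Irreducible (P.map (algebraMap ℤ ℚ))) :
    ∃ g : ℤ[X], g.Monic ∧ g ∣ P ∧ IsUnit (g.coeff 0) ∧ 0 < g.natDegree ∧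
      g.natDegree < P.natDegree := by
  rw [← hP.irreducible_iff_irreducible_map_fraction_map, hP.irreducible_iff_natDegree'] at hirr
  push Not at hirr
  obtain ⟨f, g, -, hg, rfl, hdeg⟩ := hirr hP₁
  rw [mul_coeff_zero] at hunit
  rw [mem_Ioc] at hdeg
  exact ⟨g, hg, dvd_mul_left g f, isUnit_of_mul_isUnit_right hunit, hdeg.1, by lia⟩

variable {F : Type*} [Field F] [IsAlgClosed F]

theorem prod_roots_map_sq_eq_one {g : ℤ[X]} (hg : g.Monic) (hunit : IsUnit (g.coeff 0)) :
    (g.map (Int.castRingHom F)).roots.prod ^ 2 = 1 := by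
  have hcoeff := congrArg (· ^ 2) <| (IsAlgClosed.splits
    (g.map (Int.castRingHom F))).coeff_zero_eq_prod_roots_of_monic (hg.map _)
  rw [coeff_map, mul_pow, ← pow_mul, pow_mul', neg_one_sq, one_pow, one_mul, ← map_pow,
    Int.isUnit_sq hunit, map_one] at hcoeff
  exact hcoeff.symm

variable {ι : Type*} [Fintype ι] [DecidableEq ι]

theorem exists_fin_prod_pow_eq_prod_roots {A : Matrix ι ι F} {k : ℕ} (hk : 0 < k) {g : F[X]}
    (hg : g ∣ (A ^ k).charpoly) :
    ∃ μ : Fin g.natDegree → F, (∀ j, μ j ∈ spectrum F A) ∧ (∏ j, μ j) ^ k = g.roots.prod := by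
  have hroot (r : F) (hr : r ∈ g.roots) : ∃ μ ∈ spectrum F A, μ ^ k = r := by
    have hmem : r ∈ spectrum F (A ^ k) :=
      mem_spectrum_iff_isRoot_charpoly.2 ((isRoot_of_mem_roots hr).dvd hg)
    rwa [spectrum.map_pow_of_pos A hk] at hmem
  have hlen : g.roots.toList.length = g.natDegree := by
    rw [Multiset.length_toList, (IsAlgClosed.splits g).natDegree_eq_card_roots]
  rw [← hlen]
  choose μ hμ hpow using fun j : Fin g.roots.toList.length ↦
    hroot (g.roots.toList.get j) (Multiset.mem_toList.1 (List.get_mem _ j))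
  refine ⟨μ, hμ, ?_⟩
  rw [← prod_pow, prod_congr rfl fun j _ ↦ hpow j, ← List.prod_ofFn, List.ofFn_get,
    Multiset.prod_toList]

variable (F) in
theorem exists_isOfFinOrder_prod_of_not_irreducible_charpoly_pow [Nonempty ι] {A : Matrix ι ι ℤ}
    (hA : IsUnit A.det) {k : ℕ} (hk : 0 < k)
    (hirr : ¬ Irreducible ((A ^ k).charpoly.map (algebraMap ℤ ℚ))) :
    ∃ d ∈ Ioo 0 (Fintype.card ι), ∃ μ : Fin d → F,
      (∀ j, μ j ∈ spectrum F (A.map (Int.castRingHom F))) ∧ IsOfFinOrder (∏ j, μ j) := by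
  have hdeg : (A ^ k).charpoly.natDegree = Fintype.card ι := charpoly_natDegree_eq_dim _
  have hunit : IsUnit ((A ^ k).charpoly.coeff 0) := by
    have := det_eq_sign_charpoly_coeff (A ^ k)
    exact isUnit_of_mul_isUnit_right (this ▸ det_pow A k ▸ hA.pow k)
  obtain ⟨g, hg, hdvd, hgunit, hpos, hlt⟩ := exists_monic_dvd_of_not_irreducible_map
    (charpoly_monic (A ^ k)) (fun h ↦ Fintype.card_ne_zero (hdeg ▸ h ▸ natDegree_one)) hunit hirr
  have hdvd' : g.map (Int.castRingHom F) ∣ ((A.map (Int.castRingHom F)) ^ k).charpoly := by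
    rw [← RingHom.mapMatrix_apply, ← map_pow, RingHom.mapMatrix_apply, charpoly_map]
    exact Polynomial.map_dvd _ hdvd
  obtain ⟨μ, hμ, hprod⟩ := exists_fin_prod_pow_eq_prod_roots hk hdvd'
  rw [← hg.natDegree_map (Int.castRingHom F)] at hpos hlt
  rw [hdeg] at hlt
  have hfin : IsOfFinOrder ((∏ j, μ j) ^ k) :=
    isOfFinOrder_iff_pow_eq_one.2 ⟨2, two_pos, hprod ▸ prod_roots_map_sq_eq_one hg hgunit⟩
  exact ⟨_, mem_Ioo.2 ⟨hpos, hlt⟩, μ, hμ, hfin.of_pow hk.ne'⟩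

end ReducibleCharpoly

section ReducibilityPolynomial

open Matrix MvPolynomial

variable (ι : Type*) [Fintype ι] [DecidableEq ι]

/-- A polynomial in the matrix entries that vanishes at every `A ∈ SL(ι, ℤ)` having a power with
reducible characteristic polynomial: for such `A` some product of `0 < d < |ι|` eigenvalues is a
root of unity, which is detected by the `d`-th factor. -/
noncomputable def reducibilityPolynomial : MvPolynomial (ι × ι) ℤ :=
  ∏ d ∈ Ioo 0 (Fintype.card ι),
    tensorPowTest (Fin d) (2 * Fintype.card (Fin d → ι)).factorial (mvPolynomialX ι ι ℤ)

theorem reducibilityPolynomial_ne_zero : reducibilityPolynomial ι ≠ 0 := by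
  refine prod_ne_zero_iff.2 fun d hd ↦ ?_
  obtain ⟨hd₀, hd⟩ := mem_Ioo.1 hd
  have : NeZero d := ⟨hd₀.ne'⟩
  exact tensorPowTest_mvPolynomialX_ne_zero (by simpa using hd) (Nat.factorial_ne_zero _)

theorem exists_isHomogeneous_reducibilityPolynomial :
    ∃ e, (reducibilityPolynomial ι).IsHomogeneous e :=
  ⟨_, IsHomogeneous.prod _ _ _ fun _ _ ↦ isHomogeneous_tensorPowTest_mvPolynomialX _⟩

variable {ι}

theorem entryEval_reducibilityPolynomial_eq_zero [Nonempty ι] {A : Matrix ι ι ℤ} (hA : A.det = 1)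
    {k : ℕ} (hk : 0 < k) (hirr : ¬ Irreducible ((A ^ k).charpoly.map (algebraMap ℤ ℚ))) :
    entryEval A (reducibilityPolynomial ι) = 0 := by
  obtain ⟨d, hd, μ, hμ, hfin⟩ :=
    exists_isOfFinOrder_prod_of_not_irreducible_charpoly_pow ℂ (hA ▸ isUnit_one) hk hirr
  rw [reducibilityPolynomial, map_prod]
  refine prod_eq_zero hd ?_
  rw [← tensorPowTest_map, ← RingHom.mapMatrix_apply, mapMatrix_entryEval_mvPolynomialX]
  exact tensorPowTest_eq_zero_of_isOfFinOrder hA hμ hfin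

end ReducibilityPolynomial

theorem stmt12_general {ι : Type*} [Fintype ι] [DecidableEq ι] [Nontrivial ι] {α : Type*}
    [Fintype α] (s : α → Matrix.SpecialLinearGroup ι ℤ) (hs : (generatingPrimes s).Infinite) :
    Tendsto (wordProportion s fun M ↦ ∀ k : ℕ, 1 ≤ k → Irreducible
      ((Matrix.charpoly ((M ^ k : Matrix.SpecialLinearGroup ι ℤ) : Matrix ι ι ℤ)).map
        (algebraMap ℤ ℚ))) atTop (𝓝 1) := by
  have : Nonempty α := nonempty_of_generatingPrimes_nonempty hs.nonempty
  obtain ⟨e, he⟩ := exists_isHomogeneous_reducibilityPolynomial ι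
  refine tendsto_wordProportion_one (fun M hM ↦ ?_)
    (tendsto_wordProportion_entryEval_eq_zero hs (reducibilityPolynomial_ne_zero ι) he)
  push Not at hM
  obtain ⟨k, hk, hirr⟩ := hM
  exact entryEval_reducibilityPolynomial_eq_zero M.2 hk hirr

open scoped Classical in
/-- the proportion of words of length `L` in a finite generating
set of `SL(n, ℤ)` whose product `M_w` has the property that the characteristic
polynomial of every power `M_w^k` (`k ≥ 1`) is irreducible over `ℚ` tends to
`1` as `L → ∞`. -/
theorem stmt12 (n : ℕ) (hn : 2 ≤ n)
    (S : Finset (Matrix.SpecialLinearGroup (Fin n) ℤ))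
    (hS : Subgroup.closure (S : Set (Matrix.SpecialLinearGroup (Fin n) ℤ)) = ⊤) :
    Filter.Tendsto (fun L : ℕ =>
        ((Finset.univ.filter (fun w : Fin L → {x // x ∈ S} =>
            let M : Matrix.SpecialLinearGroup (Fin n) ℤ :=
              (List.ofFn fun i => (w i : Matrix.SpecialLinearGroup (Fin n) ℤ)).prod
            ∀ k : ℕ, 1 ≤ k →
              Irreducible
                ((Matrix.charpoly ((M ^ k : Matrix.SpecialLinearGroup (Fin n) ℤ) :
                    Matrix (Fin n) (Fin n) ℤ)).map (algebraMap ℤ ℚ)))).card : ℝ) /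
        ((S.card : ℝ) ^ L))
      Filter.atTop (nhds 1) := by
  have : Nontrivial (Fin n) := Fin.nontrivial_iff_two_le.2 hn
  rw [← Fintype.card_coe S]
  exact stmt12_general (Subtype.val : {x // x ∈ S} → _)
    (infinite_generatingPrimes_of_closure_eq_top (by rwa [Subtype.range_coe]))
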